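/- Let A : ℝ^k → ℝ^ℓ be a linear map between finite-dimensional real inner product spaces, let w ∈ ℝ^k with ‖w‖ = 1, let K ⊆ ℝ^k be a bounded set, and let μ* ∈ K be a maximizer of μ ↦ ⟪w, μ⟫ over K. Let Q : ℝ^k → (ker A)^⊥ denote the orthogonal projection onto the orthogonal complement of ker A. Then for every μ ∈ K, ⟪Q(w), μ − μ*⟫ ≤ ρ(A; w) · diam K. -/

import Mathlib

open scoped RealInnerProductSpace

/-- The teaching risk of a worldview `A` with respect to reward weights `w`:
`ρ(A; w) = sup { ⟪w, v⟫ : v ∈ ker A, ‖v‖ ≤ 1 }`. -/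
noncomputable def teachingRisk {k : ℕ} {F : Type*} [AddCommGroup F] [Module ℝ F]
    (A : EuclideanSpace ℝ (Fin k) →ₗ[ℝ] F) (w : EuclideanSpace ℝ (Fin k)) : ℝ :=
  sSup {r : ℝ | ∃ v ∈ LinearMap.ker A, ‖v‖ ≤ 1 ∧ r = ⟪w, v⟫}

theorem inner_projection_diff_le_teachingRisk_mul_diam {k l : ℕ}
    (A : EuclideanSpace ℝ (Fin k) →ₗ[ℝ] EuclideanSpace ℝ (Fin l))
    (w : EuclideanSpace ℝ (Fin k)) (hw : ‖w‖ = 1)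
    (K : Set (EuclideanSpace ℝ (Fin k))) (hK : Bornology.IsBounded K)
    (μstar : EuclideanSpace ℝ (Fin k)) (hμstar : μstar ∈ K)
    (hmax : ∀ μ ∈ K, ⟪w, μ⟫ ≤ ⟪w, μstar⟫) :
    ∀ μ ∈ K,
      ⟪(Submodule.orthogonalProjectionOnto (LinearMap.ker A)ᗮ w : EuclideanSpace ℝ (Fin k)), μ - μstar⟫ ≤
        teachingRisk A w * Metric.diam K := by
  intro μ hμ
  set q : EuclideanSpace ℝ (Fin k) :=
    (Submodule.orthogonalProjectionOnto (LinearMap.ker A)ᗮ w : EuclideanSpace ℝ (Fin k)) with hq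
  have hqmem : q ∈ (LinearMap.ker A)ᗮ := by
    rw [hq]; exact Subtype.property _
  have hpmem : w - q ∈ LinearMap.ker A := by
    have h : w - q ∈ (LinearMap.ker A)ᗮᗮ := by
      rw [hq]; exact Submodule.sub_starProjection_mem_orthogonal w
    rwa [Submodule.orthogonal_orthogonal] at h
  obtain ⟨p, hp⟩ : ∃ p, p = w - q := ⟨_, rfl⟩
  rw [← hp] at hpmem
  have hw' : w = q + p := by rw [hp]; abel
  have hqp : ⟪q, p⟫ = 0 := Submodule.inner_left_of_mem_orthogonal hpmem hqmem
  have hbdd : BddAbove {r : ℝ | ∃ v ∈ LinearMap.ker A, ‖v‖ ≤ 1 ∧ r = ⟪w, v⟫} := by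
    refine ⟨1, ?_⟩
    rintro r ⟨v, -, hv, rfl⟩
    calc ⟪w, v⟫ ≤ ‖w‖ * ‖v‖ := real_inner_le_norm w v
      _ ≤ 1 := by rw [hw, one_mul]; exact hv
  have hrisk : ‖p‖ ≤ teachingRisk A w := by
    apply le_csSup hbdd
    refine ⟨‖p‖⁻¹ • p, Submodule.smul_mem _ _ hpmem, ?_, ?_⟩
    · rw [norm_smul, norm_inv, norm_norm]
      exact inv_mul_le_one
    · rw [real_inner_smul_right, hw', inner_add_left, hqp, zero_add,
        real_inner_self_eq_norm_mul_norm]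
      by_cases h : ‖p‖ = 0
      · simp [h]
      · field_simp
  have hd : ‖μ - μstar‖ ≤ Metric.diam K := by
    rw [← dist_eq_norm]; exact Metric.dist_le_diam_of_mem hK hμ hμstar
  have h1 : ⟪w, μ - μstar⟫ ≤ 0 := by
    rw [inner_sub_right]; linarith [hmax μ hμ]
  have h2 : ⟪w, μ - μstar⟫ = ⟪q, μ - μstar⟫ + ⟪p, μ - μstar⟫ := by
    rw [← inner_add_left, ← hw']
  have h3 : -⟪p, μ - μstar⟫ ≤ ‖p‖ * ‖μ - μstar‖ :=
    (neg_le_abs _).trans (abs_real_inner_le_norm _ _)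
  have h4 : ‖p‖ * ‖μ - μstar‖ ≤ teachingRisk A w * Metric.diam K :=
    mul_le_mul hrisk hd (norm_nonneg _) ((norm_nonneg _).trans hrisk)
  linarith
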